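/- For every integer n ≥ 1, the total number of vertices over all subtrees of the comb C_n is R(C_n) = 3(n−2)·2^{n+1} + 4(n+3), where R(T) = Σ_S |S| with the sum ranging over all subtrees S of T. -/

import Mathlib

/-- A subtree of a graph: a nonempty set of vertices inducing a connected subgraph. -/
def IsSubtree {V : Type*} (G : SimpleGraph V) (S : Finset V) : Prop :=
  S.Nonempty ∧ (G.induce (S : Set V)).Connected

/-- `R(T) = Σ_S |S|`: the total number of vertices over all subtrees. -/
noncomputable def totalSubtreeOrder {V : Type*} [Fintype V] (G : SimpleGraph V) : ℕ :=
  ∑ S ∈ (Set.toFinite {S : Finset V | IsSubtree G S}).toFinset, S.card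

/-- The comb `C_n`: a path with `n` vertices (the `Sum.inl` vertices), with one pendant
leaf (the corresponding `Sum.inr` vertex) attached to each path vertex. -/
def comb (n : ℕ) : SimpleGraph (Fin n ⊕ Fin n) :=
  SimpleGraph.fromRel fun a b => match a, b with
    | Sum.inl i, Sum.inl j => (i : ℕ) + 1 = (j : ℕ)
    | Sum.inl i, Sum.inr j => i = j
    | _, _ => False

/-- A predicate separating two vertices of a connected induced subgraph is crossed by an edge. -/
theorem SimpleGraph.Preconnected.exists_adj_of_induce {V : Type*} {G : SimpleGraph V} {S : Set V}
    (h : (G.induce S).Preconnected) (p : V → Prop) {u v : V} (hu : u ∈ S) (hv : v ∈ S)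
    (hpu : p u) (hpv : ¬ p v) : ∃ x ∈ S, ∃ y ∈ S, p x ∧ ¬ p y ∧ G.Adj x y := by
  obtain ⟨w⟩ := h ⟨u, hu⟩ ⟨v, hv⟩
  obtain ⟨d, -, h₁, h₂⟩ := w.exists_boundary_dart {x | p x.1} hpu hpv
  exact ⟨_, d.fst.2, _, d.snd.2, h₁, h₂, d.adj⟩

theorem comb_adj_inl_inl {n : ℕ} {i j : Fin n} :
    (comb n).Adj (Sum.inl i) (Sum.inl j) ↔ (i : ℕ) + 1 = j ∨ (j : ℕ) + 1 = i := by
  simp only [comb, SimpleGraph.fromRel_adj, ne_eq, Sum.inl.injEq, Fin.ext_iff]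
  omega

theorem comb_adj_inl_inr {n : ℕ} {i j : Fin n} :
    (comb n).Adj (Sum.inl i) (Sum.inr j) ↔ i = j := by
  simp [comb]

theorem comb_adj_inr_inl {n : ℕ} {i j : Fin n} :
    (comb n).Adj (Sum.inr i) (Sum.inl j) ↔ i = j := by
  rw [SimpleGraph.adj_comm, comb_adj_inl_inr, eq_comm]

theorem not_comb_adj_inr_inr {n : ℕ} {i j : Fin n} :
    ¬ (comb n).Adj (Sum.inr i) (Sum.inr j) := by
  simp [comb]

theorem isSubtree_singleton {V : Type*} (G : SimpleGraph V) (v : V) : IsSubtree G {v} := by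
  refine ⟨Finset.singleton_nonempty v, ?_⟩
  rw [Finset.coe_singleton]
  exact SimpleGraph.Connected.of_subsingleton

/-- A segment of the spine together with some of its leaves is a subtree. -/
theorem isSubtree_comb_disjSum {n : ℕ} {a b : Fin n} (hab : a ≤ b) {B : Finset (Fin n)}
    (hB : B ⊆ Finset.Icc a b) : IsSubtree (comb n) ((Finset.Icc a b).disjSum B) := by
  have ha : Sum.inl a ∈ (Finset.Icc a b).disjSum B := by simp [hab]
  have spine : ∀ k : ℕ, ∀ i : Fin n, (i : ℕ) = a + k →
      ∀ hi : Sum.inl i ∈ (Finset.Icc a b).disjSum B,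
      ((comb n).induce ((Finset.Icc a b).disjSum B : Set (Fin n ⊕ Fin n))).Reachable
        ⟨Sum.inl a, ha⟩ ⟨Sum.inl i, hi⟩ := by
    intro k
    induction k with
    | zero =>
      intro i hik hi
      obtain rfl : i = a := Fin.ext hik
      rfl
    | succ k ih =>
      intro i hik hi
      have hib : i ≤ b := (Finset.mem_Icc.1 (Finset.inl_mem_disjSum.1 hi)).2
      have hj : Sum.inl (⟨a + k, by omega⟩ : Fin n) ∈ (Finset.Icc a b).disjSum B := by
        simp only [Finset.inl_mem_disjSum, Finset.mem_Icc, Fin.le_def] at hib ⊢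
        omega
      refine (ih _ rfl hj).trans (SimpleGraph.Adj.reachable ?_)
      exact comb_adj_inl_inl.2 (Or.inl (by simp only; omega))
  have inl_reachable (i : Fin n) (hi : Sum.inl i ∈ (Finset.Icc a b).disjSum B) :=
    spine (i - a) i (by
      have : a ≤ i := (Finset.mem_Icc.1 (Finset.inl_mem_disjSum.1 hi)).1
      rw [Fin.le_def] at this
      omega) hi
  refine ⟨⟨_, ha⟩, (SimpleGraph.connected_iff_exists_forall_reachable _).2 ⟨⟨_, ha⟩, ?_⟩⟩
  rintro ⟨i | i, hi⟩
  · exact inl_reachable i hi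
  · have hl : Sum.inl i ∈ (Finset.Icc a b).disjSum B :=
      Finset.inl_mem_disjSum.2 (hB (Finset.inr_mem_disjSum.1 hi))
    refine (inl_reachable i hl).trans (SimpleGraph.Adj.reachable ?_)
    exact comb_adj_inl_inr.2 rfl

/-- The subtrees of the comb are the single leaves and the segments of the spine together with
some of their leaves. -/
theorem isSubtree_comb_iff {n : ℕ} {S : Finset (Fin n ⊕ Fin n)} :
    IsSubtree (comb n) S ↔ (∃ i, S = {Sum.inr i}) ∨
      ∃ a b : Fin n, a ≤ b ∧ ∃ B ⊆ Finset.Icc a b, S = (Finset.Icc a b).disjSum B := by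
  constructor
  · rintro ⟨hne, hconn⟩
    have hpre := hconn.preconnected
    rw [or_iff_not_imp_left]
    intro hleaf
    have stem_mem : ∀ i, Sum.inr i ∈ S → Sum.inl i ∈ S := by
      intro i hi
      obtain ⟨v, hv, hvi⟩ : ∃ v ∈ S, v ≠ Sum.inr i := by
        by_contra! hall
        exact hleaf ⟨i, Finset.eq_singleton_iff_unique_mem.2 ⟨hi, hall⟩⟩
      obtain ⟨x, -, y, hy, rfl, -, hadj⟩ :=
        hpre.exists_adj_of_induce (· = Sum.inr i) (Finset.mem_coe.2 hi) (Finset.mem_coe.2 hv)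
          rfl hvi
      rcases y with j | j
      · obtain rfl := comb_adj_inr_inl.1 hadj
        exact hy
      · exact (not_comb_adj_inr_inr hadj).elim
    have convex : ∀ a b c, Sum.inl a ∈ S → Sum.inl c ∈ S → a ≤ b → b ≤ c → Sum.inl b ∈ S := by
      intro a b c ha hc hab hbc
      rcases hab.eq_or_lt with rfl | hab
      · exact ha
      obtain ⟨x, -, y, hy, hx, hy', hadj⟩ :=
        hpre.exists_adj_of_induce (fun v => Sum.elim id id v < b) (Finset.mem_coe.2 ha)
          (Finset.mem_coe.2 hc) hab hbc.not_gt
      rcases x with i | i <;> rcases y with j | j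
      · rw [comb_adj_inl_inl] at hadj
        simp only [Sum.elim_inl, id_eq, Fin.lt_def] at hx hy'
        obtain rfl : j = b := Fin.ext (by omega)
        exact hy
      · exact (hy' (comb_adj_inl_inr.1 hadj ▸ hx)).elim
      · exact (hy' (comb_adj_inr_inl.1 hadj ▸ hx)).elim
      · exact (not_comb_adj_inr_inr hadj).elim
    have hleft : S.toLeft.Nonempty := by
      obtain ⟨i | i, hi⟩ := hne
      · exact ⟨i, Finset.mem_toLeft.2 hi⟩
      · exact ⟨i, Finset.mem_toLeft.2 (stem_mem i hi)⟩
    have hIcc : S.toLeft = Finset.Icc (S.toLeft.min' hleft) (S.toLeft.max' hleft) := by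
      ext i
      rw [Finset.mem_Icc]
      refine ⟨fun hi => ⟨Finset.min'_le _ _ hi, Finset.le_max' _ _ hi⟩, fun hi => ?_⟩
      exact Finset.mem_toLeft.2 (convex _ i _ (Finset.mem_toLeft.1 (Finset.min'_mem _ hleft))
        (Finset.mem_toLeft.1 (Finset.max'_mem _ hleft)) hi.1 hi.2)
    refine ⟨_, _, Finset.min'_le_max' _ hleft, S.toRight, ?_, ?_⟩
    · rw [← hIcc]
      exact fun i hi => Finset.mem_toLeft.2 (stem_mem i (Finset.mem_toRight.1 hi))
    · rw [← hIcc, Finset.toLeft_disjSum_toRight]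
  · rintro (⟨i, rfl⟩ | ⟨a, b, hab, B, hB, rfl⟩)
    · exact isSubtree_singleton _ _
    · exact isSubtree_comb_disjSum hab hB

theorem two_mul_sum_powerset_card_add {α : Type*} (s : Finset α) :
    2 * ∑ B ∈ s.powerset, (s.card + B.card) = 3 * s.card * 2 ^ s.card := by
  have h : 2 * ∑ B ∈ s.powerset, B.card = s.card * 2 ^ s.card := by
    rw [Finset.sum_powerset_apply_card (fun k => k), mul_comm]
    simp only [smul_eq_mul]
    rcases s.card with _ | m
    · simp
    · simp_rw [mul_comm (Nat.choose _ _)]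
      rw [Nat.sum_range_mul_choose]
      simp only [Nat.add_sub_cancel, pow_succ]
      ring
  rw [Finset.sum_add_distrib, mul_add, h]
  simp
  ring

theorem totalSubtreeOrder_comb (n : ℕ) :
    totalSubtreeOrder (comb n) = n + ∑ p : Fin n × Fin n with p.1 ≤ p.2,
      ∑ B ∈ (Finset.Icc p.1 p.2).powerset, ((Finset.Icc p.1 p.2).card + B.card) := by
  classical
  let I : Finset (Σ _ : Fin n × Fin n, Finset (Fin n)) :=
    (Finset.univ.filter fun p : Fin n × Fin n => p.1 ≤ p.2).sigma
      fun p => (Finset.Icc p.1 p.2).powerset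
  let f : (Σ _ : Fin n × Fin n, Finset (Fin n)) → Finset (Fin n ⊕ Fin n) :=
    fun q => (Finset.Icc q.1.1 q.1.2).disjSum q.2
  have hset : (Set.toFinite {S | IsSubtree (comb n) S}).toFinset =
      Finset.univ.image (fun i : Fin n => {Sum.inr i}) ∪ I.image f := by
    ext S
    simp only [Set.Finite.mem_toFinset, Set.mem_ofPred_eq, isSubtree_comb_iff, Finset.mem_union,
      Finset.mem_image, Finset.mem_univ, true_and, I, f, Finset.mem_sigma, Finset.mem_filter,
      Finset.mem_powerset, Sigma.exists, Prod.exists]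
    grind
  have hdisj : Disjoint (Finset.univ.image
      (fun i : Fin n => ({Sum.inr i} : Finset (Fin n ⊕ Fin n)))) (I.image f) := by
    rw [Finset.disjoint_left]
    intro S hS hS'
    obtain ⟨i, -, rfl⟩ := Finset.mem_image.1 hS
    obtain ⟨⟨⟨a, b⟩, B⟩, hq, h⟩ := Finset.mem_image.1 hS'
    have hab : a ≤ b := by simpa [I] using (Finset.mem_sigma.1 hq).1
    have : Sum.inl a ∈ f ⟨(a, b), B⟩ := by simp [f, hab]
    simp [h] at this
  have hinj : Set.InjOn f I := by
    rintro ⟨⟨a, b⟩, B⟩ hq ⟨⟨c, d⟩, D⟩ hq' h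
    have hab : a ≤ b := by simpa [I] using (Finset.mem_sigma.1 hq).1
    have hL := congrArg Finset.toLeft h
    have hR := congrArg Finset.toRight h
    simp only [f, Finset.toLeft_disjSum, Finset.toRight_disjSum] at hL hR
    rw [← Finset.coe_inj, Finset.coe_Icc, Finset.coe_Icc, Set.Icc_eq_Icc_iff hab] at hL
    obtain ⟨rfl, rfl⟩ := hL
    rw [hR]
  rw [totalSubtreeOrder, hset, Finset.sum_union hdisj, Finset.sum_image hinj, Finset.sum_image
    (by intro i _ j _ h; simpa using h), Finset.sum_sigma]
  simp [f, Finset.card_disjSum]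

theorem sum_filter_fin_le {M : Type*} [AddCommMonoid M] (n : ℕ) (g : ℕ → M) :
    ∑ p : Fin n × Fin n with p.1 ≤ p.2, g (p.2 + 1 - p.1) =
      ∑ m ∈ Finset.range n, ∑ k ∈ Finset.range (m + 1), g (k + 1) := by
  rw [Finset.sum_filter, Fintype.sum_prod_type_right, ← Fin.sum_univ_eq_sum_range]
  refine Finset.sum_congr rfl fun b _ => ?_
  rw [← Finset.sum_range_reflect]
  simp only [Fin.le_def]
  rw [Fin.sum_univ_eq_sum_range (fun a => if a ≤ (b : ℕ) then g (b + 1 - a) else 0),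
    ← Finset.sum_filter]
  have : (Finset.range n).filter (· ≤ (b : ℕ)) = Finset.range (b + 1) := by
    ext a
    simp only [Finset.mem_filter, Finset.mem_range]
    omega
  rw [this]
  refine Finset.sum_congr rfl fun a ha => ?_
  rw [Finset.mem_range] at ha
  congr 1
  omega

theorem sum_range_three_mul_mul_two_pow (m : ℕ) :
    ∑ k ∈ Finset.range m, (3 * ((k + 1 : ℕ) : ℤ) * 2 ^ (k + 1)) =
      6 * (((m : ℤ) - 1) * 2 ^ m + 1) := by
  induction m with
  | zero => simp
  | succ m ih =>
    rw [Finset.sum_range_succ, ih]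
    push_cast
    ring

theorem stmt17 (n : ℕ) (hn : 1 ≤ n) :
    (totalSubtreeOrder (comb n) : ℤ) =
      3 * ((n : ℤ) - 2) * 2 ^ (n + 1) + 4 * ((n : ℤ) + 3) := by
  have h : 2 * totalSubtreeOrder (comb n) = 2 * n +
      ∑ m ∈ Finset.range n, ∑ k ∈ Finset.range (m + 1), 3 * (k + 1) * 2 ^ (k + 1) := by
    rw [totalSubtreeOrder_comb, mul_add, Finset.mul_sum (s := Finset.filter _ _),
      ← sum_filter_fin_le n (fun m => 3 * m * 2 ^ m)]
    simp only [two_mul_sum_powerset_card_add]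
    simp only [Fin.card_Icc]
  have hsum : ∀ n : ℕ, ∑ m ∈ Finset.range n, 6 * ((((m + 1 : ℕ) : ℤ) - 1) * 2 ^ (m + 1) + 1) =
      6 * ((n : ℤ) - 2) * 2 ^ (n + 1) + 6 * n + 24 := by
    intro n
    induction n with
    | zero => simp
    | succ n ih =>
      rw [Finset.sum_range_succ, ih]
      push_cast
      ring
  have h' := congrArg (Nat.cast : ℕ → ℤ) h
  push_cast at h'
  have key := hsum n
  simp only [← sum_range_three_mul_mul_two_pow] at key
  push_cast at key
  linarith
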